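/- arXiv:0807.4128 — 3 statements merged into one kernel-verified Lean document; each statement's English description precedes it below -/
import Mathlib

section
/- For every integer a ≥ 1 and every i with 0 ≤ i ≤ 2^a - 1, the set N_i^(a) has exactly a + 1 elements. Consequently, if x_1, …, x_{a+1} are all nonzero complex numbers, each row of G_a(x_1, …, x_{a+1}) contains exactly a + 1 nonzero entries, so the fraction of zero entries of G_a is 1 - (a+1)/2^a. -/
/-!
The row counts come from identifying the support: when all variables are nonzero, the entry
`(i, j)` of `G_a` is nonzero exactly when `j ∈ N_i^(a)`, i.e. when `i ⊕ j` is `0` or one of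
`2 ^ k` with `k < a` (`Gent_ne_zero_iff`).  This is an induction on `a` along the block
structure: the two diagonal blocks reproduce the support of `G_{a-1}` (transposed in the second
block, but the condition on `i ⊕ j` is symmetric), and the two scalar off-diagonal blocks
contribute the pairs differing in the top bit only.  The set `N_i^(a)` has `a + 1` elements
because `k ↦ i ⊕ k` is injective and `0, 2 ^ 0, …, 2 ^ (a - 1)` are distinct (`Nset_ncard`).
-/

open Matrix Complex

noncomputable section

/-- Entry function of the square complex orthogonal design `G_a`.  Variables are
indexed `0, 1, …, a`, corresponding to `x_1, …, x_{a+1}` of the paper.  For `a = 0`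
the design is the `1 × 1` matrix `[x 0]`, and the recursive block structure
`G_{a+1} = [[G_a, -conj(x_{a+2})·I], [x_{a+2}·I, G_aᴴ]]` is encoded entrywise. -/
def Gent : ℕ → (ℕ → ℂ) → ℕ → ℕ → ℂ
  | 0, x, _, _ => x 0
  | (a + 1), x, i, j =>
    if i < 2 ^ a then
      if j < 2 ^ a then Gent a x i j
      else if j = i + 2 ^ a then -((starRingEnd ℂ) (x (a + 1))) else 0
    else
      if j < 2 ^ a then (if i = j + 2 ^ a then x (a + 1) else 0)
      else (starRingEnd ℂ) (Gent a x (j - 2 ^ a) (i - 2 ^ a))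

/-- The design `G_a` as a `2^a × 2^a` complex matrix. -/
def Gmat (a : ℕ) (x : ℕ → ℂ) : Matrix (Fin (2 ^ a)) (Fin (2 ^ a)) ℂ :=
  Matrix.of fun i j => Gent a x i j
/-- `N_i^(a) = {i} ∪ {i ⊕ 2^j : 0 ≤ j ≤ a-1}` (⊕ is bitwise XOR). -/
def Nset (a i : ℕ) : Set ℕ := {i} ∪ {k | ∃ j < a, k = i ^^^ 2 ^ j}

/-- Setting the top bit: for `i < 2 ^ a`, adding `2 ^ a` is the same as flipping bit `a`. -/
theorem add_two_pow_eq_xor {a i : ℕ} (hi : i < 2 ^ a) : i + 2 ^ a = i ^^^ 2 ^ a := by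
  apply Nat.eq_of_testBit_eq
  intro k
  rw [Nat.add_comm, Nat.testBit_xor, Nat.testBit_two_pow]
  rcases lt_trichotomy k a with h | h | h
  · rw [Nat.testBit_two_pow_add_gt h]
    simp [h.ne']
  · subst h
    rw [Nat.testBit_two_pow_add_eq]
    simp
  · have h1 : 2 ^ (a + 1) ≤ 2 ^ k := Nat.pow_le_pow_right (by norm_num) h
    rw [Nat.testBit_lt_two_pow (x := i) (by rw [pow_succ] at h1; omega),
      Nat.testBit_lt_two_pow (by rw [pow_succ] at h1; omega)]
    simp [h.ne]

theorem mem_Nset_iff {a i j : ℕ} :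
    j ∈ Nset a i ↔ i ^^^ j = 0 ∨ ∃ k < a, i ^^^ j = 2 ^ k := by
  have key : ∀ m : ℕ, j = i ^^^ m ↔ i ^^^ j = m := by
    intro m
    constructor
    · rintro rfl
      rw [Nat.xor_xor_cancel_left]
    · rintro rfl
      rw [Nat.xor_xor_cancel_left]
  simp only [Nset, Set.mem_union, Set.mem_singleton_iff, Set.mem_setOf_eq, key]
  rw [← key 0, Nat.xor_zero]

theorem mem_Nset_comm {a i j : ℕ} : j ∈ Nset a i ↔ i ∈ Nset a j := by
  rw [mem_Nset_iff, mem_Nset_iff, Nat.xor_comm]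

theorem Nset_lt {a i j : ℕ} (hi : i < 2 ^ a) (hj : j ∈ Nset a i) : j < 2 ^ a := by
  rcases hj with rfl | ⟨k, hk, rfl⟩
  · exact hi
  · exact Nat.xor_lt_two_pow hi (Nat.pow_lt_pow_right (by norm_num) hk)

/-- Passing from `a` to `a + 1` adds the single neighbour obtained by flipping bit `a`. -/
theorem mem_Nset_succ {a i j : ℕ} :
    j ∈ Nset (a + 1) i ↔ j ∈ Nset a i ∨ j = i ^^^ 2 ^ a := by
  simp only [Nset, Set.mem_union, Set.mem_singleton_iff, Set.mem_setOf_eq, Nat.lt_succ_iff_lt_or_eq]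
  constructor
  · rintro (h | ⟨k, h | rfl, h'⟩)
    · exact .inl (.inl h)
    · exact .inl (.inr ⟨k, h, h'⟩)
    · exact .inr h'
  · rintro ((h | ⟨k, h, h'⟩) | h)
    · exact .inl h
    · exact .inr ⟨k, .inl h, h'⟩
    · exact .inr ⟨a, .inr rfl, h⟩

/-- The support of row `i` of `G_a` is `N_i^(a)`.  In the lower right block the conjugate
transpose swaps the two indices, which is harmless since membership in `N` is symmetric. -/
theorem Gent_ne_zero_iff (x : ℕ → ℂ) (a : ℕ) (hx : ∀ k < a + 1, x k ≠ 0) :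
    ∀ i < 2 ^ a, ∀ j < 2 ^ a, (Gent a x i j ≠ 0 ↔ j ∈ Nset a i) := by
  induction a with
  | zero =>
    intro i hi j hj
    obtain rfl : i = 0 := by simpa using hi
    obtain rfl : j = 0 := by simpa using hj
    simpa [Gent, Nset] using hx 0 (by norm_num)
  | succ a ih =>
    have ih := ih fun k hk => hx k (by omega)
    have hxa : x (a + 1) ≠ 0 := hx (a + 1) (by omega)
    intro i hi j hj
    rw [pow_succ] at hi hj
    by_cases hia : i < 2 ^ a
    · by_cases hja : j < 2 ^ a
      · have h : j ≠ i + 2 ^ a := by omega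
        rw [mem_Nset_succ, ← add_two_pow_eq_xor hia, ← ih i hia j hja]
        simp [Gent, hia, hja, h]
      · have h : j ∉ Nset a i := fun h => hja (Nset_lt hia h)
        rw [mem_Nset_succ, ← add_two_pow_eq_xor hia]
        simp [Gent, hia, hja, h, hxa]
    · by_cases hja : j < 2 ^ a
      · have h : i ∉ Nset a j := fun h => hia (Nset_lt hja h)
        rw [mem_Nset_comm, mem_Nset_succ, ← add_two_pow_eq_xor hja]
        simp [Gent, hia, hja, h, hxa]
      · obtain ⟨i, rfl⟩ := Nat.exists_eq_add_of_le' (not_lt.mp hia)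
        obtain ⟨j, rfl⟩ := Nat.exists_eq_add_of_le' (not_lt.mp hja)
        have hi' : i < 2 ^ a := by omega
        have hj' : j < 2 ^ a := by omega
        -- Both indices carry the top bit; it cancels in their XOR.
        have hxor : (i + 2 ^ a) ^^^ (j + 2 ^ a) = j ^^^ i := by
          rw [add_two_pow_eq_xor hi', add_two_pow_eq_xor hj', Nat.xor_comm j (2 ^ a),
            Nat.xor_assoc, Nat.xor_xor_cancel_left, Nat.xor_comm]
        have h : i ≠ j + 2 ^ a := by omega
        rw [mem_Nset_iff, hxor, ← mem_Nset_iff, mem_Nset_succ, ← add_two_pow_eq_xor hj',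
          ← ih j hj' i hi']
        simp [Gent, h]

theorem Nset_ncard (a i : ℕ) : (Nset a i).ncard = a + 1 := by
  have hinj : Function.Injective fun k : ℕ => i ^^^ 2 ^ k := fun k l h =>
    Nat.pow_right_injective le_rfl (Nat.xor_right_injective h)
  have hset : Nset a i =
      ((insert i ((Finset.range a).image fun k => i ^^^ 2 ^ k) : Finset ℕ) : Set ℕ) := by
    ext k
    simp [Nset, eq_comm]
  rw [hset, Set.ncard_coe_finset, Finset.card_insert_of_notMem, Finset.card_image_of_injective _ hinj,
    Finset.card_range]
  simp only [Finset.mem_image, not_exists, not_and]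
  intro k _ h
  have h2 : 2 ^ k = 0 := Nat.xor_right_injective (h.trans (Nat.xor_zero i).symm)
  exact absurd h2 (by positivity)

/-- For every `a ≥ 1` and every `i < 2^a`, the set `N_i^(a)` has exactly `a + 1`
elements.  Consequently, if `x_1, …, x_{a+1}` are all nonzero, each row of
`G_a(x_1, …, x_{a+1})` contains exactly `a + 1` nonzero entries, so the fraction of
zero entries in each row (hence in `G_a`) is `1 - (a+1)/2^a`. -/
theorem Nset_card_and_row_zeros (a : ℕ) (ha : 1 ≤ a) (i : ℕ) (hi : i < 2 ^ a) :
    (Nset a i).ncard = a + 1 ∧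
    ∀ x : ℕ → ℂ, (∀ k < a + 1, x k ≠ 0) →
      {j : ℕ | j < 2 ^ a ∧ Gent a x i j ≠ 0}.ncard = a + 1 ∧
      ({j : ℕ | j < 2 ^ a ∧ Gent a x i j = 0}.ncard : ℚ) / 2 ^ a =
        1 - (a + 1) / 2 ^ a := by
  refine ⟨Nset_ncard a i, fun x hx => ?_⟩
  have hsupp : {j : ℕ | j < 2 ^ a ∧ Gent a x i j ≠ 0} = Nset a i := by
    ext j
    constructor
    · rintro ⟨hj, h⟩
      exact (Gent_ne_zero_iff x a hx i hi j hj).1 h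
    · intro h
      have hj := Nset_lt hi h
      exact ⟨hj, (Gent_ne_zero_iff x a hx i hi j hj).2 h⟩
  have hcard : {j : ℕ | j < 2 ^ a ∧ Gent a x i j ≠ 0}.ncard = a + 1 := by
    rw [hsupp, Nset_ncard]
  refine ⟨hcard, ?_⟩
  have hfin : (Set.Iio (2 ^ a)).Finite := Set.finite_Iio _
  have hsum := Set.ncard_inter_add_ncard_diff_eq_ncard (Set.Iio (2 ^ a))
    {j : ℕ | Gent a x i j = 0} hfin
  have h1 : Set.Iio (2 ^ a) ∩ {j : ℕ | Gent a x i j = 0} =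
      {j : ℕ | j < 2 ^ a ∧ Gent a x i j = 0} := rfl
  have h2 : Set.Iio (2 ^ a) \ {j : ℕ | Gent a x i j = 0} =
      {j : ℕ | j < 2 ^ a ∧ Gent a x i j ≠ 0} := rfl
  have h3 : (Set.Iio (2 ^ a) : Set ℕ).ncard = 2 ^ a := by
    rw [← Finset.coe_Iio, Set.ncard_coe_finset, Nat.card_Iio]
  rw [h1, h2, h3, hcard] at hsum
  have hq : ({j : ℕ | j < 2 ^ a ∧ Gent a x i j = 0}.ncard : ℚ) + (a + 1) = 2 ^ a := by
    exact_mod_cast hsum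
  field_simp
  linarith
end
end

section
/- Let a ≥ 1 be an integer and let d be the unique positive integer with 2^{d-1} ≤ a < 2^d. For every i with 0 ≤ i ≤ 2^a - 1 and all distinct x, y in the coset {i ⊕ s : s ∈ S^a}, one has N_x^(a) ∩ N_y^(a) = ∅. -/
/-!
The set `S^a` consists of codewords of a (shortened) Hamming code.  Define the syndrome of `n` as
the XOR of `k + 1` over all positions `k < a` at which `n` has a one; it is additive for XOR
(`syn_xor`).  The syndrome of `f(x)` is the XOR of `x` with the XOR of the powers `2^j` occurring
in the radix-2 representation of `x`, which is `0` (`syn_fM`); hence the syndrome vanishes on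
`S^a` and is constant on each coset.

If `x, y` lie in one coset and `x ⊕ e = y ⊕ e'` with `e, e' ∈ {0} ∪ {2^j : j < a}`, then `e` and
`e'` have equal syndromes.  The syndromes of `0` and of `2^j` are `0` and `j + 1`, which are
pairwise distinct, so `e = e'` and `x = y`.
-/

/-- `M_a = {x : 1 ≤ x ≤ a and x is not a power of 2}`. -/
def Ma (a : ℕ) : Set ℕ := {x | 1 ≤ x ∧ x ≤ a ∧ ∀ k : ℕ, x ≠ 2 ^ k}

/-- For `x` with radix-2 representation `x = Σ_j x_j 2^j`,
`f(x) = 2^(x-1) + Σ_j x_j 2^(2^j - 1)`  (the sum ranges over all binary digits of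
`x`, all of which occur at positions `< x`). -/
def fM (x : ℕ) : ℕ :=
  2 ^ (x - 1) + ∑ j ∈ Finset.range x, if Nat.testBit x j then 2 ^ (2 ^ j - 1) else 0

/-- The Hamming weight of a natural number: the number of ones in its radix-2
representation (the sum of the binary digits). -/
def wt (n : ℕ) : ℕ := (Nat.digits 2 n).sum

/-- `S^a`: the 𝔽₂-linear span of `M_a' = f(M_a)` under bitwise XOR, i.e. the set
of all XORs of (finite, duplicate-free) collections of elements of `M_a'`, with
the empty XOR equal to `0`. -/
def Sa (a : ℕ) : Set ℕ :=
  {s | ∃ l : List ℕ, l.Nodup ∧ (∀ x ∈ l, x ∈ fM '' Ma a) ∧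
        s = l.foldr (· ^^^ ·) 0}

/-- The Hamming syndrome of the `K` lowest binary digits of `n`: the XOR of `k + 1` over all
`k < K` such that the `k`-th digit of `n` is one. -/
def syn : ℕ → ℕ → ℕ
  | 0, _ => 0
  | K + 1, n => syn K n ^^^ (if n.testBit K then K + 1 else 0)

lemma syn_xor (K m n : ℕ) : syn K (m ^^^ n) = syn K m ^^^ syn K n := by
  induction K with
  | zero => simp [syn]
  | succ K ih =>
    have key : (if (m ^^^ n).testBit K then K + 1 else 0) =
        (if m.testBit K then K + 1 else 0) ^^^ (if n.testBit K then K + 1 else 0) := by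
      rw [Nat.testBit_xor]
      cases m.testBit K <;> cases n.testBit K <;> simp
    simp only [syn]
    rw [key, ih]
    ac_rfl

lemma syn_zero (K : ℕ) : syn K 0 = 0 := by
  induction K with
  | zero => rfl
  | succ K ih => simp [syn, ih]

lemma syn_two_pow (K j : ℕ) : syn K (2 ^ j) = if j < K then j + 1 else 0 := by
  induction K with
  | zero => simp [syn]
  | succ K ih =>
    simp only [syn, ih, Nat.testBit_two_pow, decide_eq_true_eq]
    rcases lt_trichotomy j K with h | h | h
    · simp [h, h.ne, h.trans (Nat.lt_succ_self K)]
    · simp [h]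
    · have h3 : ¬ j < K + 1 := by omega
      simp [h.ne', h.not_gt, h3]

lemma two_pow_add_eq_xor {k r : ℕ} (h : r < 2 ^ k) : r + 2 ^ k = r ^^^ 2 ^ k := by
  apply Nat.eq_of_testBit_eq
  intro j
  rw [Nat.testBit_xor, add_comm, Nat.testBit_two_pow]
  rcases lt_trichotomy j k with hj | hj | hj
  · rw [Nat.testBit_two_pow_add_gt hj]
    simp [hj.ne']
  · subst hj
    rw [Nat.testBit_two_pow_add_eq, Nat.testBit_lt_two_pow h]
    simp
  · have h4 : 2 ^ (k + 1) ≤ 2 ^ j := Nat.pow_le_pow_right (by norm_num) hj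
    have h5 : 2 ^ (k + 1) = 2 * 2 ^ k := by ring
    rw [Nat.testBit_lt_two_pow (x := 2 ^ k + r) (by omega),
      Nat.testBit_lt_two_pow (x := r) (by omega)]
    simp [hj.ne]

/-- The truncation to digits `j < m` of the sum in the definition of `fM`. -/
def partialSum (x m : ℕ) : ℕ :=
  ∑ j ∈ Finset.range m, if Nat.testBit x j then 2 ^ (2 ^ j - 1) else 0

/-- The summands of `partialSum x m` are distinct powers of two with exponents less than
`2 ^ m - 1`. This makes the additions carry-free. -/
lemma partialSum_lt (x m : ℕ) : partialSum x m < 2 ^ (2 ^ m - 1) := by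
  induction m with
  | zero => simp [partialSum]
  | succ m ih =>
    have hp : 0 < 2 ^ m := by positivity
    have hs : 2 ^ (m + 1) = 2 * 2 ^ m := by ring
    have h1 : 2 ^ (2 ^ m - 1 + 1) ≤ 2 ^ (2 ^ (m + 1) - 1) :=
      Nat.pow_le_pow_right (by norm_num) (by omega)
    rw [pow_succ] at h1
    have h2 : partialSum x (m + 1) ≤ partialSum x m + 2 ^ (2 ^ m - 1) := by
      unfold partialSum
      rw [Finset.sum_range_succ]
      split_ifs <;> simp
    omega

/-- If `x` is not a power of two, the leading term `2 ^ (x - 1)` of `fM x` exceeds the rest, so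
that this addition is carry-free as well. -/
lemma partialSum_lt_of_not_pow {x : ℕ} (hx : ∀ k : ℕ, x ≠ 2 ^ k) (m : ℕ) :
    partialSum x m < 2 ^ (x - 1) := by
  induction m with
  | zero => simp [partialSum]
  | succ m ih =>
    have hs : partialSum x (m + 1) =
        partialSum x m + if Nat.testBit x m then 2 ^ (2 ^ m - 1) else 0 := by
      simp [partialSum, Finset.sum_range_succ]
    rw [hs]
    split_ifs with hb
    · have hp : 0 < 2 ^ m := by positivity
      have hle := Nat.ge_two_pow_of_testBit hb
      have hne := hx m
      have h1 : 2 ^ (2 ^ m - 1 + 1) ≤ 2 ^ (x - 1) :=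
        Nat.pow_le_pow_right (by norm_num) (by omega)
      rw [pow_succ] at h1
      have h2 := partialSum_lt x m
      omega
    · simpa using ih

lemma syn_partialSum {a x : ℕ} (hxa : x ≤ a) (m : ℕ) :
    syn a (partialSum x m) = x % 2 ^ m := by
  induction m with
  | zero => simp [partialSum, syn_zero, Nat.mod_one]
  | succ m ih =>
    have hs : partialSum x (m + 1) =
        partialSum x m + if Nat.testBit x m then 2 ^ (2 ^ m - 1) else 0 := by
      simp [partialSum, Finset.sum_range_succ]
    rw [hs, Nat.mod_pow_succ, ← Nat.toNat_testBit]
    split_ifs with hb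
    · have hp : 0 < 2 ^ m := by positivity
      have hle := Nat.ge_two_pow_of_testBit hb
      have hlt : x % 2 ^ m < 2 ^ m := Nat.mod_lt _ hp
      rw [two_pow_add_eq_xor (partialSum_lt x m), syn_xor, ih, syn_two_pow,
        if_pos (by omega), Nat.sub_add_cancel hp, ← two_pow_add_eq_xor hlt]
      simp [hb, add_comm]
    · simp [hb, ih]

lemma syn_fM {a x : ℕ} (hx : x ∈ Ma a) : syn a (fM x) = 0 := by
  obtain ⟨h1, hxa, hpow⟩ := hx
  have hf : fM x = partialSum x x + 2 ^ (x - 1) := add_comm _ _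
  rw [hf, two_pow_add_eq_xor (partialSum_lt_of_not_pow hpow x), syn_xor,
    syn_partialSum hxa, syn_two_pow, if_pos (by omega), Nat.sub_add_cancel h1,
    Nat.mod_eq_of_lt Nat.lt_two_pow_self, Nat.xor_self]

lemma syn_Sa {a s : ℕ} (hs : s ∈ Sa a) : syn a s = 0 := by
  obtain ⟨l, -, hl, rfl⟩ := hs
  induction l with
  | nil => exact syn_zero a
  | cons b l ih =>
    obtain ⟨x, hx, hb⟩ := hl b List.mem_cons_self
    rw [List.foldr_cons, syn_xor, ih fun y hy => hl y (List.mem_cons_of_mem _ hy), ← hb,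
      syn_fM hx, Nat.xor_self]

/-- Elements of `Nset a x` are determined by `x` and their syndrome: the error pattern `e` in
`z = x ^^^ e` is recovered from `syn a e` alone. -/
lemma exists_of_mem_Nset {a x z : ℕ} (hz : z ∈ Nset a x) :
    ∃ e, z = x ^^^ e ∧ e = if syn a e = 0 then 0 else 2 ^ (syn a e - 1) := by
  rcases hz with hz | ⟨j, hj, hz⟩
  · refine ⟨0, ?_, ?_⟩
    · rw [Nat.xor_zero]
      exact hz
    · simp [syn_zero]
  · exact ⟨2 ^ j, hz, by simp [syn_two_pow, hj]⟩

/-- Let `d` be the unique positive integer with `2^(d-1) ≤ a < 2^d`.  For every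
`i < 2^a` and all distinct `x, y` in the coset `{i ⊕ s : s ∈ S^a}`, one has
`N_x^(a) ∩ N_y^(a) = ∅`. -/
theorem coset_rows_nonintersecting (a d : ℕ) (ha : 1 ≤ a) (hd : 1 ≤ d)
    (h1 : 2 ^ (d - 1) ≤ a) (h2 : a < 2 ^ d) (i : ℕ) (hi : i < 2 ^ a) :
    ∀ x ∈ {t : ℕ | ∃ s ∈ Sa a, t = i ^^^ s},
      ∀ y ∈ {t : ℕ | ∃ s ∈ Sa a, t = i ^^^ s},
        x ≠ y → Nset a x ∩ Nset a y = ∅ := by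
  rintro x ⟨s, hs, hx⟩ y ⟨t, ht, hy⟩ hxy
  rw [Set.eq_empty_iff_forall_notMem]
  rintro z ⟨hzx, hzy⟩
  obtain ⟨e, hze, he⟩ := exists_of_mem_Nset hzx
  obtain ⟨e', hze', he'⟩ := exists_of_mem_Nset hzy
  have hsx : syn a x = syn a i := by rw [hx, syn_xor, syn_Sa hs, Nat.xor_zero]
  have hsy : syn a y = syn a i := by rw [hy, syn_xor, syn_Sa ht, Nat.xor_zero]
  have hsyn : syn a e = syn a e' := by
    have h := congrArg (syn a) (hze.symm.trans hze')
    rw [syn_xor, syn_xor, hsx, hsy] at h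
    exact Nat.xor_right_injective h
  have hee : e = e' := by rw [he, he', hsyn]
  subst hee
  exact hxy (Nat.xor_left_injective (hze.symm.trans hze'))
end

section
/- Let a ≥ 1 be an integer and let d be the unique positive integer with 2^{d-1} ≤ a < 2^d. Then for all x, y ∈ M_a, the matrices Q̃_x and Q̃_y commute: Q̃_x · Q̃_y = Q̃_y · Q̃_x. -/
/-- The `2^a × 2^a` real matrix `Q̃_x`:  `Q̃_x(i, i) = (-1)^(bit (x-1) of i)`,
`Q̃_x(i, i ⊕ f(x)) = 1`, and all other entries are `0`. -/
def Qt (a x : ℕ) : Matrix (Fin (2 ^ a)) (Fin (2 ^ a)) ℝ :=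
  Matrix.of fun i j =>
    if (j : ℕ) = (i : ℕ) then (if Nat.testBit (i : ℕ) (x - 1) then -1 else 1)
    else if (j : ℕ) = (i : ℕ) ^^^ fM x then 1 else 0

/-- A sum of distinct powers of two has its binary digits exactly at the exponents. -/
lemma testBit_sum_two_pow (S : Finset ℕ) (k : ℕ) :
    Nat.testBit (∑ i ∈ S, 2 ^ i) k = true ↔ k ∈ S := by
  rw [← Nat.mem_bitIndices, ← List.mem_toFinset, Finset.toFinset_bitIndices_twoPowSum]

/-- The set of exponents occurring in `f(x)`; each occurs only once when `x` is not a power of two. -/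
def expSet (x : ℕ) : Finset ℕ :=
  insert (x - 1) (((Finset.range x).filter fun j => Nat.testBit x j).image fun j => 2 ^ j - 1)

lemma fM_eq_sum {a x : ℕ} (hx : x ∈ Ma a) : fM x = ∑ i ∈ expSet x, 2 ^ i := by
  obtain ⟨hx1, -, hp⟩ := hx
  unfold fM expSet
  rw [Finset.sum_insert, Finset.sum_image, Finset.sum_filter]
  · intro i _ j _ hij
    have hi := Nat.one_le_two_pow (n := i)
    have hj := Nat.one_le_two_pow (n := j)
    have : 2 ^ i = 2 ^ j := by
      dsimp only at hij
      omega
    exact Nat.pow_right_injective le_rfl this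
  · simp only [Finset.mem_image, not_exists, not_and]
    intro j _ hj
    have := Nat.one_le_two_pow (n := j)
    exact hp j (by omega)

lemma testBit_fM_ne {a x y : ℕ} (hx : x ∈ Ma a) (hy : y ∈ Ma a) (hxy : x ≠ y) :
    Nat.testBit (fM y) (x - 1) = false := by
  rw [fM_eq_sum hy, ← Bool.not_eq_true, testBit_sum_two_pow]
  obtain ⟨hx1, -, hp⟩ := hx
  obtain ⟨hy1, -, -⟩ := hy
  simp only [expSet, Finset.mem_insert, Finset.mem_image, not_or, not_exists, not_and]
  refine ⟨by omega, fun j _ hj => ?_⟩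
  have := Nat.one_le_two_pow (n := j)
  exact hp j (by omega)

lemma fM_ne_zero (x : ℕ) : fM x ≠ 0 := by
  have := Nat.one_le_two_pow (n := x - 1)
  unfold fM
  omega

lemma fM_lt {a x : ℕ} (hx : x ∈ Ma a) : fM x < 2 ^ a := by
  rw [fM_eq_sum hx]
  refine Nat.lt_pow_two_of_testBit _ fun k hk => ?_
  rw [← Bool.not_eq_true, testBit_sum_two_pow]
  obtain ⟨hx1, hxa, -⟩ := hx
  simp only [expSet, Finset.mem_insert, Finset.mem_image, Finset.mem_filter, not_or, not_exists,
    not_and]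
  refine ⟨by omega, fun j hj hjk => ?_⟩
  have := Nat.ge_two_pow_of_testBit hj.2
  omega

/-- The diagonal entry `(-1)^(bit (x-1) of i)` of `Q̃_x`. -/
def sgn (x i : ℕ) : ℝ := if Nat.testBit i (x - 1) then -1 else 1

/-- The involution `i ↦ i ⊕ f(x)` of the index set. -/
def xorF {a x : ℕ} (hx : x ∈ Ma a) (i : Fin (2 ^ a)) : Fin (2 ^ a) :=
  ⟨i ^^^ fM x, Nat.xor_lt_two_pow i.2 (fM_lt hx)⟩

/-- The decomposition `Q̃_x = D_x + P_x`; the two parts have disjoint supports as `f(x) ≠ 0`. -/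
lemma Qt_apply {a x : ℕ} (hx : x ∈ Ma a) (i j : Fin (2 ^ a)) :
    Qt a x i j = (if j = i then sgn x i else 0) + (if j = xorF hx i then 1 else 0) := by
  have hne : i ≠ xorF hx i := by
    intro h
    have h' : (i : ℕ) ^^^ 0 = i ^^^ fM x := by
      rw [Nat.xor_zero]
      exact congrArg Fin.val h
    exact fM_ne_zero x (Nat.xor_right_injective h').symm
  simp only [Qt, Matrix.of_apply, ← Fin.ext_iff, sgn]
  by_cases h : j = i
  · subst h
    simp [hne]
  · simp [h, xorF, Fin.ext_iff]

lemma Qt_mul_apply {a x : ℕ} (hx : x ∈ Ma a) (B : Matrix (Fin (2 ^ a)) (Fin (2 ^ a)) ℝ)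
    (i k : Fin (2 ^ a)) : (Qt a x * B) i k = sgn x i * B i k + B (xorF hx i) k := by
  simp [Matrix.mul_apply, Qt_apply hx, add_mul, Finset.sum_add_distrib]

lemma sgn_xorF {a x y : ℕ} (hx : x ∈ Ma a) (hy : y ∈ Ma a) (hxy : x ≠ y) (i : Fin (2 ^ a)) :
    sgn x (xorF hy i) = sgn x i := by
  simp [sgn, xorF, Nat.testBit_xor, testBit_fM_ne hx hy hxy]

lemma xorF_comm {a x y : ℕ} (hx : x ∈ Ma a) (hy : y ∈ Ma a) (i : Fin (2 ^ a)) :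
    xorF hx (xorF hy i) = xorF hy (xorF hx i) := by
  simp [xorF, Nat.xor_right_comm]

/-- Let `d` be the unique positive integer with `2^(d-1) ≤ a < 2^d`.  For all
`x, y ∈ M_a`, the matrices `Q̃_x` and `Q̃_y` commute. -/
theorem Qt_commute (a d : ℕ) (ha : 1 ≤ a) (hd : 1 ≤ d)
    (h1 : 2 ^ (d - 1) ≤ a) (h2 : a < 2 ^ d)
    (x y : ℕ) (hx : x ∈ Ma a) (hy : y ∈ Ma a) :
    Qt a x * Qt a y = Qt a y * Qt a x := by
  rcases eq_or_ne x y with rfl | hxy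
  · rfl
  ext i k
  rw [Qt_mul_apply hx, Qt_mul_apply hy]
  simp only [Qt_apply hx, Qt_apply hy, sgn_xorF hx hy hxy, sgn_xorF hy hx hxy.symm,
    xorF_comm hx hy]
  split_ifs <;> ring
end
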